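/- Let ν ∈ (0,1] and T > 0. Let ξ : [0,T] × S¹ → ℝ be continuous with continuous space derivatives ∂_x^j ξ for j = 1,2,3 and ∫_{S¹} ξ(t,x) dx = 0 for every t, and set K = max(1, sup_{0≤t≤T} max_{0≤j≤3} sup_x |∂_x^j ξ(t,x)|). Let u : [0,T] × S¹ → ℝ be continuous with ∫_{S¹} u(t,x) dx = 0 for every t and with continuous space derivatives ∂_x^j u for j = 1,2,3 on [0,T] × S¹, and suppose v := u − ξ has continuous derivatives ∂_t v and ∂_t ∂_x v on (0,T] × S¹ and satisfies pointwise ∂_t v + u·∂_x u − ν·∂_x² v = ν·∂_x² ξ on (0,T] × S¹. Then there exists a constant C = C(T) > 0, independent of u, ξ and of ν ∈ (0,1], such that for every θ ∈ (0,T]: (a) sup_{θ≤t≤T} sup_x (∂_x u(t,x))⁺ ≤ C·θ⁻¹·K, and (b) sup_{θ≤t≤T} ( sup_x |u(t,x)| + ∫_{S¹} |∂_x u(t,x)| dx ) ≤ C·θ⁻¹·K, where a⁺ = max(a,0). -/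

import Mathlib

open Set

/-!
The quantity `w = u_x - ξ_x` satisfies `w_t = ν u_xxx - u_x² - u u_xx`. Where `w(t, ·)` attains a
maximum `m > 0` we have `u_xx = ξ_xx` and `u_xxx ≤ ξ_xxx`; moreover `u_x ≤ m + K` everywhere, and a
mean-zero function on the circle is bounded by any upper bound of its derivative, so
`|u| ≤ m + K`. Hence `w_t ≤ -w² + 3 K w + O(K²)` at such a point, and the diffusion only helps.
At a maximum point of `t w` over `[0, T] × S¹` the inequality `∂ₜ(t w) ≥ 0` then turns into a
quadratic inequality for `t w`, whose solution `t w ≤ C K` does not see the initial data. Finally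
an upper bound for `u_x` alone controls both `|u|_∞` and `|u_x|_{L¹}`, since `u` and `u_x` have
mean zero.
-/

section Periodic

lemma periodic_deriv {𝕜 F : Type*} [NontriviallyNormedField 𝕜] [NormedAddCommGroup F]
    [NormedSpace 𝕜 F] {f : 𝕜 → F} {c : 𝕜} (hf : Function.Periodic f c) :
    Function.Periodic (deriv f) c := fun x => by
  rw [← deriv_comp_add_const, hf.funext]

variable {f : ℝ → ℝ} {L M : ℝ}

lemma nonneg_of_periodic_of_deriv_le (hL : 0 < L) (hper : Function.Periodic f L)
    (hf : Differentiable ℝ f) (hle : ∀ x, deriv f x ≤ M) : 0 ≤ M := by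
  have hincr : f L - f 0 ≤ M * (L - 0) := image_sub_le_mul_sub_of_deriv_le hf hle hL.le
  rw [hper.eq, sub_self, sub_zero] at hincr
  exact nonneg_of_mul_nonneg_left hincr hL

lemma sub_le_of_periodic_of_deriv_le (hL : 0 < L) (hper : Function.Periodic f L)
    (hf : Differentiable ℝ f) (hle : ∀ x, deriv f x ≤ M) (x y : ℝ) : f x - f y ≤ M * L := by
  obtain ⟨z, ⟨hyz, hzL⟩, hxz⟩ := hper.exists_mem_Ico hL x y
  calc f x - f y = f z - f y := by rw [hxz]
    _ ≤ M * (z - y) := image_sub_le_mul_sub_of_deriv_le hf hle hyz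
    _ ≤ M * L := by
      gcongr
      · exact nonneg_of_periodic_of_deriv_le hL hper hf hle
      · linarith

lemma abs_le_of_periodic_of_integral_eq_zero_of_deriv_le (hL : 0 < L)
    (hper : Function.Periodic f L) (hf : Differentiable ℝ f)
    (hmean : ∫ x in (0 : ℝ)..L, f x = 0) (hle : ∀ x, deriv f x ≤ M) (x : ℝ) :
    |f x| ≤ M * L := by
  obtain ⟨c, -, hc⟩ := exists_eq_interval_average hL.ne hf.continuous.continuousOn
  rw [interval_average_eq_div, hmean, zero_div] at hc
  have hosc := sub_le_of_periodic_of_deriv_le hL hper hf hle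
  exact abs_le.2 ⟨by linarith [hosc c x], by linarith [hosc x c]⟩

lemma integral_abs_deriv_le_of_periodic_of_deriv_le (hL : 0 < L)
    (hper : Function.Periodic f L) (hf : ContDiff ℝ 1 f) (hle : ∀ x, deriv f x ≤ M) :
    ∫ x in (0 : ℝ)..L, |deriv f x| ≤ 2 * (M * L) := by
  have hcont : Continuous (deriv f) := hf.continuous_deriv_one
  have hdiff : Differentiable ℝ f := hf.differentiable one_ne_zero
  have hM : 0 ≤ M := nonneg_of_periodic_of_deriv_le hL hper hdiff hle
  have hint : ∫ x in (0 : ℝ)..L, deriv f x = 0 := by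
    rw [intervalIntegral.integral_deriv_eq_sub (fun x _ => hdiff x)
      (hcont.intervalIntegrable _ _), hper.eq, sub_self]
  calc ∫ x in (0 : ℝ)..L, |deriv f x| ≤ ∫ x in (0 : ℝ)..L, (2 * M - deriv f x) := by
        refine intervalIntegral.integral_mono_on hL.le (hcont.abs.intervalIntegrable _ _)
          ((continuous_const.sub hcont).intervalIntegrable _ _) fun x _ => ?_
        exact abs_le.2 ⟨by linarith, by linarith [hle x]⟩
    _ = 2 * (M * L) := by
        rw [intervalIntegral.integral_sub intervalIntegrable_const
          (hcont.intervalIntegrable _ _), hint, intervalIntegral.integral_const, smul_eq_mul]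
        ring

lemma exists_forall_le_of_isCompact_of_periodic {X : Type*} [TopologicalSpace X] {s : Set X}
    {f : X → ℝ → ℝ} (hs : IsCompact s) (hne : s.Nonempty) (hL : 0 < L)
    (hper : ∀ t ∈ s, Function.Periodic (f t) L)
    (hcont : ContinuousOn (fun p : X × ℝ => f p.1 p.2) (s ×ˢ univ)) :
    ∃ t₀ ∈ s, ∃ x₀, ∀ t ∈ s, ∀ x, f t x ≤ f t₀ x₀ := by
  obtain ⟨⟨t₀, x₀⟩, ⟨ht₀, -⟩, hmax⟩ := (hs.prod isCompact_Icc).exists_isMaxOn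
    (hne.prod (nonempty_Icc.2 hL.le)) (hcont.mono (prod_mono le_rfl (subset_univ _)))
  refine ⟨t₀, ht₀, x₀, fun t ht x => ?_⟩
  obtain ⟨y, hy, hxy⟩ := (hper t ht).exists_mem_Ico₀ hL x
  rw [hxy]
  exact hmax (show (t, y) ∈ s ×ˢ Icc 0 L from ⟨ht, Ico_subset_Icc_self hy⟩)

end Periodic

section Extrema

variable {f : ℝ → ℝ}

lemma deriv_deriv_nonpos_of_isLocalMax {x : ℝ} (hmax : IsLocalMax f x)
    (hf : ContinuousAt f x) : deriv (deriv f) x ≤ 0 := by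
  by_contra! hpos
  have hmin : IsLocalMin f x := isLocalMin_of_deriv_deriv_pos hpos hmax.deriv_eq_zero hf
  have hconst : f =ᶠ[nhds x] fun _ => f x := by
    filter_upwards [hmax, hmin] with y hle hge using le_antisymm hle hge
  have hzero : deriv (deriv f) x = 0 := by simpa using hconst.deriv.deriv_eq
  exact hpos.ne' hzero

lemma nonneg_of_isMaxOn_Icc_right {f' a b : ℝ} (hab : a < b) (hmax : IsMaxOn f (Icc a b) b)
    (hf : HasDerivWithinAt f f' (Icc a b) b) : 0 ≤ f' := by
  have hcone : a - b ∈ posTangentConeAt (Icc a b) b :=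
    sub_mem_posTangentConeAt_of_segment_subset (by rw [segment_symm, segment_eq_Icc hab.le])
  have hmul : (a - b) * f' ≤ 0 := by
    simpa using hmax.localize.hasFDerivWithinAt_nonpos hf.hasFDerivWithinAt hcone
  exact nonneg_of_mul_nonpos_right hmul (sub_neg.2 hab)

end Extrema

section MixedDerivatives

variable {E : Type*} [NormedAddCommGroup E] [NormedSpace ℝ E] {I J : Set ℝ}
  {v vₜ vₜₓ : ℝ → ℝ → E}

lemma norm_mixed_increment_le {t t₀ x y ε : ℝ} {c : E} (hI : Convex ℝ I) (hJ : Convex ℝ J)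
    (hv : ∀ τ ∈ I, ∀ z ∈ J, HasDerivWithinAt (fun s => v s z) (vₜ τ z) I τ)
    (hvₜ : ∀ τ ∈ I, ∀ z ∈ J, HasDerivWithinAt (vₜ τ) (vₜₓ τ z) J z)
    (hvₜₓ : ∀ τ ∈ I, ∀ z ∈ J, ‖vₜₓ τ z - c‖ ≤ ε)
    (ht₀ : t₀ ∈ I) (ht : t ∈ I) (hx : x ∈ J) (hy : y ∈ J) :
    ‖(v t y - v t x - (t * (y - x)) • c) - (v t₀ y - v t₀ x - (t₀ * (y - x)) • c)‖
      ≤ ε * ‖y - x‖ * ‖t - t₀‖ := by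
  have hspace : ∀ τ ∈ I, ‖vₜ τ y - vₜ τ x - (y - x) • c‖ ≤ ε * ‖y - x‖ := fun τ hτ => by
    have hmvt := hJ.norm_image_sub_le_of_norm_hasDerivWithin_le
      (f := fun z => vₜ τ z - z • c) (f' := fun z => vₜₓ τ z - c)
      (fun z hz => by
        simpa using (hvₜ τ hτ z hz).fun_sub ((hasDerivWithinAt_id z J).smul_const c))
      (hvₜₓ τ hτ) hx hy
    convert hmvt using 2
    module
  refine hI.norm_image_sub_le_of_norm_hasDerivWithin_le
    (f := fun τ => v τ y - v τ x - (τ * (y - x)) • c)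
    (f' := fun τ => vₜ τ y - vₜ τ x - (y - x) • c) (fun τ hτ => ?_) hspace ht₀ ht
  simpa using ((hv τ hτ y hy).fun_sub (hv τ hτ x hx)).fun_sub
    (((hasDerivWithinAt_id τ I).mul_const (y - x)).smul_const c)

lemma hasDerivWithinAt_of_continuousWithinAt_mixed {vₓ : ℝ → E} {t₀ x : ℝ} (hI : Convex ℝ I)
    (hv : ∀ t ∈ I, ∀ y, HasDerivWithinAt (fun s => v s y) (vₜ t y) I t)
    (hvₜ : ∀ t ∈ I, ∀ y, HasDerivAt (vₜ t) (vₜₓ t y) y)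
    (hvₓ : ∀ t ∈ I, HasDerivAt (v t) (vₓ t) x) (ht₀ : t₀ ∈ I)
    (hcont : ContinuousWithinAt (fun p : ℝ × ℝ => vₜₓ p.1 p.2) (I ×ˢ univ) (t₀, x)) :
    HasDerivWithinAt vₓ (vₜₓ t₀ x) I t₀ := by
  rw [hasDerivWithinAt_iff_isLittleO, Asymptotics.isLittleO_iff]
  intro ε hε
  obtain ⟨δ, hδ, hclose⟩ := Metric.continuousWithinAt_iff.1 hcont ε hε
  filter_upwards [self_mem_nhdsWithin, mem_nhdsWithin_of_mem_nhds (Metric.ball_mem_nhds t₀ hδ)]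
    with t ht htδ
  have hderiv : HasDerivAt (fun y => v t y - v t₀ y - ((t - t₀) * y) • vₜₓ t₀ x)
      (vₓ t - vₓ t₀ - (t - t₀) • vₜₓ t₀ x) x := by
    simpa using ((hvₓ t ht).fun_sub (hvₓ t₀ ht₀)).fun_sub
      (((hasDerivAt_id x).const_mul (t - t₀)).smul_const (vₜₓ t₀ x))
  refine hderiv.le_of_lip' (by positivity) ?_
  filter_upwards [Metric.ball_mem_nhds x hδ] with y hy
  have hincr := norm_mixed_increment_le (hI.inter (convex_ball t₀ δ)) (convex_ball x δ)
    (fun τ hτ z _ => (hv τ hτ.1 z).mono inter_subset_left)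
    (fun τ hτ z _ => (hvₜ τ hτ.1 z).hasDerivWithinAt)
    (fun τ hτ z hz => by
      rw [← dist_eq_norm]
      exact (hclose (x := (τ, z)) ⟨hτ.1, mem_univ z⟩ (max_lt hτ.2 hz)).le)
    ⟨ht₀, Metric.mem_ball_self hδ⟩ ⟨ht, htδ⟩ (Metric.mem_ball_self hδ) hy
  calc _ = _ := by congr 1; module
    _ ≤ _ := hincr
    _ = _ := by ring

end MixedDerivatives

section Riccati

lemma le_add_of_sq_le_mul_add_sq {a b y : ℝ} (ha : 0 ≤ a) (hb : 0 ≤ b)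
    (h : y ^ 2 ≤ a * y + b ^ 2) : y ≤ a + b := by
  by_contra! hlt
  have hb_lt : b < y - a := by linarith
  nlinarith [mul_le_mul (by linarith : b ≤ y) hb_lt.le hb (by linarith)]

lemma mul_le_of_riccati_at_max {T L a b : ℝ} {w w' : ℝ → ℝ → ℝ} (hL : 0 < L) (ha : 0 ≤ a)
    (hb : 0 ≤ b) (hper : ∀ t ∈ Icc 0 T, Function.Periodic (w t) L)
    (hcont : ContinuousOn (fun p : ℝ × ℝ => w p.1 p.2) (Icc 0 T ×ˢ univ))
    (hderiv : ∀ t ∈ Ioc 0 T, ∀ x, HasDerivWithinAt (fun s => w s x) (w' t x) (Ioc 0 T) t)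
    (hriccati : ∀ t ∈ Ioc 0 T, ∀ x, 0 < w t x → (∀ y, w t y ≤ w t x) →
      w' t x ≤ -w t x ^ 2 + a * w t x + b ^ 2)
    {t : ℝ} (ht : t ∈ Icc 0 T) (x : ℝ) : t * w t x ≤ 1 + (a + b) * T := by
  have hT : 0 ≤ T := ht.1.trans ht.2
  obtain ⟨t₀, ht₀, x₀, hmax⟩ := exists_forall_le_of_isCompact_of_periodic
    (f := fun t x => t * w t x) isCompact_Icc ⟨t, ht⟩ hL
    (fun t ht y => by simp only [hper t ht y]) (continuousOn_fst.mul hcont)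
  refine (hmax t ht x).trans ?_
  rcases le_or_gt (t₀ * w t₀ x₀) 0 with hnonpos | hpos
  · exact hnonpos.trans (by positivity)
  have ht₀_pos : 0 < t₀ := ht₀.1.lt_of_ne' (left_ne_zero_of_mul hpos.ne')
  have hw_pos : 0 < w t₀ x₀ := pos_of_mul_pos_right hpos ht₀_pos.le
  have hspace : ∀ y, w t₀ y ≤ w t₀ x₀ := fun y =>
    le_of_mul_le_mul_left (hmax t₀ ht₀ y) ht₀_pos
  have htime : 0 ≤ 1 * w t₀ x₀ + t₀ * w' t₀ x₀ := by
    have hsub : Icc (t₀ / 2) t₀ ⊆ Ioc 0 T := fun s hs => ⟨by linarith [hs.1], hs.2.trans ht₀.2⟩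
    exact nonneg_of_isMaxOn_Icc_right (half_lt_self ht₀_pos)
      (fun s hs => hmax s (Ioc_subset_Icc_self (hsub hs)) x₀)
      ((hasDerivWithinAt_id t₀ _).mul ((hderiv t₀ ⟨ht₀_pos, ht₀.2⟩ x₀).mono hsub))
  have hquad : (t₀ * w t₀ x₀) ^ 2 ≤ (1 + a * t₀) * (t₀ * w t₀ x₀) + (b * t₀) ^ 2 := by
    have hrate := hriccati t₀ ⟨ht₀_pos, ht₀.2⟩ x₀ hw_pos hspace
    have hscaled := mul_le_mul_of_nonneg_left hrate (sq_nonneg t₀)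
    linarith [mul_nonneg ht₀_pos.le htime]
  calc t₀ * w t₀ x₀ ≤ 1 + a * t₀ + b * t₀ :=
        le_add_of_sq_le_mul_add_sq (by positivity) (by positivity) hquad
    _ = 1 + (a + b) * t₀ := by ring
    _ ≤ 1 + (a + b) * T := by gcongr; exact ht₀.2

end Riccati

/-- The functions `f : [0, T] × S¹ → ℝ`, `S¹ = ℝ/ℤ`, with `n` space derivatives that are jointly
continuous in time and space. A function on the circle is encoded as a `1`-periodic function
on `ℝ`; the values `f t` at times `t ∉ [0, T]` are irrelevant. -/
structure SpatiallyContDiffOnCircle (n : ℕ) (T : ℝ) (f : ℝ → ℝ → ℝ) : Prop where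
  periodic : ∀ t ∈ Icc 0 T, Function.Periodic (f t) 1
  contDiff : ∀ t ∈ Icc 0 T, ContDiff ℝ n (f t)
  continuousOn_iteratedDeriv : ∀ j : ℕ, j ≤ n →
    ContinuousOn (fun p : ℝ × ℝ => iteratedDeriv j (f p.1) p.2) (Icc 0 T ×ˢ univ)

/-- `u` is a mean-zero solution of the forced Burgers equation `u_t + u u_x - ν u_xx = ∂ₜξ` on
`[0, T] × S¹`. As `ξ` need not be differentiable in time, the equation is stated for
`v = u - ξ`, as `v_t + u u_x - ν v_xx = ν ξ_xx`. The time derivative is two-sided even at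
`t = T`. -/
structure IsForcedBurgersSolution (ν T : ℝ) (ξ u : ℝ → ℝ → ℝ) : Prop where
  force : SpatiallyContDiffOnCircle 3 T ξ
  solution : SpatiallyContDiffOnCircle 3 T u
  integral_eq_zero : ∀ t ∈ Icc 0 T, ∫ x in (0 : ℝ)..1, u t x = 0
  differentiableAt : ∀ x, ∀ t ∈ Ioc 0 T, DifferentiableAt ℝ (fun s => u s x - ξ s x) t
  equation : ∀ t ∈ Ioc 0 T, ∀ x,
    deriv (fun s => u s x - ξ s x) t + u t x * deriv (u t) x
      - ν * deriv (deriv (fun y => u t y - ξ t y)) x = ν * iteratedDeriv 2 (ξ t) x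

namespace SpatiallyContDiffOnCircle

variable {n : ℕ} {T : ℝ} {f : ℝ → ℝ → ℝ}

lemma hasDerivAt_iteratedDeriv (hf : SpatiallyContDiffOnCircle n T f) {t : ℝ} (ht : t ∈ Icc 0 T)
    {j : ℕ} (hj : j < n) (x : ℝ) :
    HasDerivAt (iteratedDeriv j (f t)) (iteratedDeriv (j + 1) (f t) x) x := by
  rw [iteratedDeriv_succ]
  exact ((hf.contDiff t ht).differentiable_iteratedDeriv j (by exact_mod_cast hj) x).hasDerivAt

end SpatiallyContDiffOnCircle

namespace IsForcedBurgersSolution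

variable {ν T N K t : ℝ} {ξ u : ℝ → ℝ → ℝ}

lemma hasDerivAt_iteratedDeriv_sub (h : IsForcedBurgersSolution ν T ξ u) (ht : t ∈ Icc 0 T)
    {j : ℕ} (hj : j < 3) (x : ℝ) :
    HasDerivAt (fun y => iteratedDeriv j (u t) y - iteratedDeriv j (ξ t) y)
      (iteratedDeriv (j + 1) (u t) x - iteratedDeriv (j + 1) (ξ t) x) x :=
  (h.solution.hasDerivAt_iteratedDeriv ht hj x).fun_sub (h.force.hasDerivAt_iteratedDeriv ht hj x)

lemma hasDerivAt_time_sub (h : IsForcedBurgersSolution ν T ξ u) (ht : t ∈ Ioc 0 T) (x : ℝ) :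
    HasDerivAt (fun s => u s x - ξ s x)
      (ν * iteratedDeriv 2 (u t) x - u t x * iteratedDeriv 1 (u t) x) t := by
  have ht' : t ∈ Icc 0 T := Ioc_subset_Icc_self ht
  have hxx : deriv (deriv fun y => u t y - ξ t y) x
      = iteratedDeriv 2 (u t) x - iteratedDeriv 2 (ξ t) x := by
    rw [← iteratedDeriv_fun_sub ((h.solution.contDiff t ht').of_le (by norm_num)).contDiffAt
      ((h.force.contDiff t ht').of_le (by norm_num)).contDiffAt, iteratedDeriv_succ,
      iteratedDeriv_one]
  have hvt : ν * iteratedDeriv 2 (u t) x - u t x * iteratedDeriv 1 (u t) x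
      = deriv (fun s => u s x - ξ s x) t := by
    rw [iteratedDeriv_one]
    linear_combination -h.equation t ht x - ν * hxx
  rw [hvt]
  exact (h.differentiableAt x t ht).hasDerivAt

lemma hasDerivWithinAt_time_deriv_sub (h : IsForcedBurgersSolution ν T ξ u) (ht : t ∈ Ioc 0 T)
    (x : ℝ) :
    HasDerivWithinAt (fun s => iteratedDeriv 1 (u s) x - iteratedDeriv 1 (ξ s) x)
      (ν * iteratedDeriv 3 (u t) x
        - (iteratedDeriv 1 (u t) x * iteratedDeriv 1 (u t) x + u t x * iteratedDeriv 2 (u t) x))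
      (Ioc 0 T) t := by
  have hmem : ∀ s ∈ Ioc 0 T, s ∈ Icc 0 T := fun s hs => Ioc_subset_Icc_self hs
  have hcont := h.solution.continuousOn_iteratedDeriv
  have hcont₀ : ContinuousOn (fun p : ℝ × ℝ => u p.1 p.2) (Icc 0 T ×ˢ univ) := by
    simpa only [iteratedDeriv_zero] using hcont 0 (by norm_num)
  have hu : ∀ s ∈ Ioc 0 T, ∀ y, HasDerivAt (u s) (iteratedDeriv 1 (u s) y) y := fun s hs y => by
    simpa only [iteratedDeriv_zero] using
      h.solution.hasDerivAt_iteratedDeriv (hmem s hs) (j := 0) (by norm_num) y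
  refine hasDerivWithinAt_of_continuousWithinAt_mixed
    (vₜₓ := fun s y => ν * iteratedDeriv 3 (u s) y
      - (iteratedDeriv 1 (u s) y * iteratedDeriv 1 (u s) y + u s y * iteratedDeriv 2 (u s) y))
    (convex_Ioc 0 T) (fun s hs y => (h.hasDerivAt_time_sub hs y).hasDerivWithinAt)
    (fun s hs y => ?_) (fun s hs => ?_) ht ?_
  · exact ((h.solution.hasDerivAt_iteratedDeriv (hmem s hs) (by norm_num) y).const_mul ν).fun_sub
      ((hu s hs y).fun_mul (h.solution.hasDerivAt_iteratedDeriv (hmem s hs) (by norm_num) y))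
  · simpa only [iteratedDeriv_zero] using
      h.hasDerivAt_iteratedDeriv_sub (hmem s hs) (j := 0) (by norm_num) x
  · exact ((continuousOn_const.mul (hcont 3 le_rfl)).sub
      (((hcont 1 (by norm_num)).mul (hcont 1 (by norm_num))).add
        (hcont₀.mul (hcont 2 (by norm_num)))) (t, x) ⟨hmem t ht, mem_univ x⟩).mono
      (prod_mono Ioc_subset_Icc_self le_rfl)

lemma abs_le_of_deriv_sub_le (h : IsForcedBurgersSolution ν T ξ u) (ht : t ∈ Icc 0 T) {m : ℝ}
    (hK : ∀ x, |iteratedDeriv 1 (ξ t) x| ≤ K)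
    (hm : ∀ x, iteratedDeriv 1 (u t) x - iteratedDeriv 1 (ξ t) x ≤ m) (x : ℝ) :
    |u t x| ≤ m + K := by
  have hderiv_le : ∀ y, deriv (u t) y ≤ m + K := fun y => by
    rw [← iteratedDeriv_one]
    linarith [hm y, (abs_le.1 (hK y)).2]
  simpa using abs_le_of_periodic_of_integral_eq_zero_of_deriv_le one_pos
    (h.solution.periodic t ht) ((h.solution.contDiff t ht).differentiable (by norm_num))
    (h.integral_eq_zero t ht) hderiv_le x

lemma riccati_at_max (h : IsForcedBurgersSolution ν T ξ u) (hν : ν ∈ Icc 0 N) (hK1 : 1 ≤ K)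
    (ht : t ∈ Icc 0 T) (hK : ∀ j ∈ Icc 1 3, ∀ x, |iteratedDeriv j (ξ t) x| ≤ K) {x m : ℝ}
    (hm : iteratedDeriv 1 (u t) x - iteratedDeriv 1 (ξ t) x = m) (hpos : 0 < m)
    (hmax : ∀ y, iteratedDeriv 1 (u t) y - iteratedDeriv 1 (ξ t) y ≤ m) :
    ν * iteratedDeriv 3 (u t) x
        - (iteratedDeriv 1 (u t) x * iteratedDeriv 1 (u t) x + u t x * iteratedDeriv 2 (u t) x)
      ≤ -m ^ 2 + 3 * K * m + ((N + 1) * K) ^ 2 := by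
  have hmax' : IsLocalMax (fun y => iteratedDeriv 1 (u t) y - iteratedDeriv 1 (ξ t) y) x :=
    Filter.Eventually.of_forall fun y => (hmax y).trans hm.ge
  have hw := h.hasDerivAt_iteratedDeriv_sub ht (j := 1) (by norm_num)
  have hxx : iteratedDeriv 2 (u t) x = iteratedDeriv 2 (ξ t) x :=
    sub_eq_zero.1 (hmax'.hasDerivAt_eq_zero (hw x))
  have hxxx : iteratedDeriv 3 (u t) x ≤ iteratedDeriv 3 (ξ t) x := by
    have hnonpos := deriv_deriv_nonpos_of_isLocalMax hmax' (hw x).continuousAt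
    rw [funext fun y => (hw y).deriv,
      (h.hasDerivAt_iteratedDeriv_sub ht (j := 2) (by norm_num) x).deriv] at hnonpos
    exact sub_nonpos.1 hnonpos
  have hu := h.abs_le_of_deriv_sub_le ht (hK 1 (by simp)) hmax x
  rw [hxx, sub_eq_iff_eq_add.1 hm]
  have hdiffusion : ν * iteratedDeriv 3 (u t) x ≤ N * K :=
    (mul_le_mul_of_nonneg_left (hxxx.trans (le_of_abs_le (hK 3 (by simp) x))) hν.1).trans
      (mul_le_mul_of_nonneg_right hν.2 (by linarith))
  have htransport : -((m + K) * K) ≤ u t x * iteratedDeriv 2 (ξ t) x := by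
    refine neg_le_of_abs_le ?_
    rw [abs_mul]
    exact mul_le_mul hu (hK 2 (by simp) x) (abs_nonneg _) ((abs_nonneg _).trans hu)
  have hsquare : m ^ 2 - 2 * K * m
      ≤ (m + iteratedDeriv 1 (ξ t) x) * (m + iteratedDeriv 1 (ξ t) x) := by
    nlinarith [neg_le_of_abs_le (hK 1 (by simp) x), sq_nonneg (iteratedDeriv 1 (ξ t) x)]
  have hconst : N * K + K ^ 2 ≤ ((N + 1) * K) ^ 2 := by
    nlinarith [mul_nonneg (hν.1.trans hν.2) (by linarith : 0 ≤ K)]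
  linarith

lemma mul_deriv_sub_le (h : IsForcedBurgersSolution ν T ξ u) (hν : ν ∈ Icc 0 N) (hK1 : 1 ≤ K)
    (hK : ∀ t ∈ Icc 0 T, ∀ j ∈ Icc 1 3, ∀ x, |iteratedDeriv j (ξ t) x| ≤ K)
    (ht : t ∈ Icc 0 T) (x : ℝ) :
    t * (iteratedDeriv 1 (u t) x - iteratedDeriv 1 (ξ t) x) ≤ (1 + (N + 4) * T) * K := by
  have hN : 0 ≤ N := hν.1.trans hν.2
  calc t * (iteratedDeriv 1 (u t) x - iteratedDeriv 1 (ξ t) x)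
      ≤ 1 + (3 * K + (N + 1) * K) * T := by
        refine mul_le_of_riccati_at_max
          (w := fun t x => iteratedDeriv 1 (u t) x - iteratedDeriv 1 (ξ t) x) one_pos
          (by positivity) (by positivity) (fun s hs => ?_)
          ((h.solution.continuousOn_iteratedDeriv 1 (by norm_num)).sub
            (h.force.continuousOn_iteratedDeriv 1 (by norm_num)))
          (fun s hs y => h.hasDerivWithinAt_time_deriv_sub hs y)
          (fun s hs y => h.riccati_at_max hν hK1 (Ioc_subset_Icc_self hs)
            (hK s (Ioc_subset_Icc_self hs)) rfl) ht x
        simp only [iteratedDeriv_one]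
        exact (periodic_deriv (h.solution.periodic s hs)).sub
          (periodic_deriv (h.force.periodic s hs))
    _ ≤ (1 + (N + 4) * T) * K := by linarith

lemma deriv_le (h : IsForcedBurgersSolution ν T ξ u) (hν : ν ∈ Icc 0 N) (hK1 : 1 ≤ K)
    (hK : ∀ t ∈ Icc 0 T, ∀ j ∈ Icc 1 3, ∀ x, |iteratedDeriv j (ξ t) x| ≤ K) {θ : ℝ}
    (hθ : 0 < θ) (ht : t ∈ Icc θ T) (x : ℝ) :
    deriv (u t) x ≤ (1 + (N + 5) * T) * θ⁻¹ * K := by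
  have ht_pos : 0 < t := hθ.trans_le ht.1
  have hT : 0 ≤ T := ht_pos.le.trans ht.2
  have hN : 0 ≤ N := hν.1.trans hν.2
  have ht' : t ∈ Icc 0 T := ⟨ht_pos.le, ht.2⟩
  have hforce : t * iteratedDeriv 1 (ξ t) x ≤ T * K :=
    mul_le_mul_of_nonneg ht.2 (le_of_abs_le (hK t ht' 1 (by simp) x)) ht_pos.le (by linarith)
  have hscaled : t * deriv (u t) x ≤ (1 + (N + 5) * T) * K := by
    rw [← iteratedDeriv_one]
    linarith [h.mul_deriv_sub_le hν hK1 hK ht' x]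
  calc deriv (u t) x = t⁻¹ * (t * deriv (u t) x) := by field_simp
    _ ≤ t⁻¹ * ((1 + (N + 5) * T) * K) := by gcongr
    _ ≤ θ⁻¹ * ((1 + (N + 5) * T) * K) := by gcongr; exact ht.1
    _ = (1 + (N + 5) * T) * θ⁻¹ * K := by ring

end IsForcedBurgersSolution

theorem stmt_5_general {T N : ℝ} (hT : 0 < T) (hN : 0 ≤ N) :
    ∃ C > (0 : ℝ), ∀ ν ∈ Icc 0 N, ∀ ξ u : ℝ → ℝ → ℝ, ∀ K : ℝ,
      IsForcedBurgersSolution ν T ξ u → 1 ≤ K →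
      (∀ t ∈ Icc 0 T, ∀ j ∈ Icc 1 3, ∀ x, |iteratedDeriv j (ξ t) x| ≤ K) →
      ∀ θ ∈ Ioc 0 T,
        (∀ t ∈ Icc θ T, ∀ x, max (deriv (u t) x) 0 ≤ C * θ⁻¹ * K) ∧
        (∀ t ∈ Icc θ T, ∀ x,
          |u t x| + ∫ y in (0 : ℝ)..1, |deriv (u t) y| ≤ C * θ⁻¹ * K) := by
  refine ⟨3 * (1 + (N + 5) * T), by positivity, fun ν hν ξ u K h hK1 hK θ hθ => ?_⟩
  have hle : ∀ t ∈ Icc θ T, ∀ x, deriv (u t) x ≤ (1 + (N + 5) * T) * θ⁻¹ * K :=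
    fun t ht x => h.deriv_le hν hK1 hK hθ.1 ht x
  have hM : 0 ≤ (1 + (N + 5) * T) * θ⁻¹ * K := by
    have := hθ.1
    positivity
  refine ⟨fun t ht x => max_le (by linarith [hle t ht x]) (by linarith), fun t ht x => ?_⟩
  have ht' : t ∈ Icc 0 T := ⟨hθ.1.le.trans ht.1, ht.2⟩
  have hper := h.solution.periodic t ht'
  have hC1 : ContDiff ℝ 1 (u t) := (h.solution.contDiff t ht').of_le (by norm_num)
  have hsup := abs_le_of_periodic_of_integral_eq_zero_of_deriv_le one_pos hper
    (hC1.differentiable one_ne_zero) (h.integral_eq_zero t ht') (hle t ht) x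
  have hL1 := integral_abs_deriv_le_of_periodic_of_deriv_le one_pos hper hC1 (hle t ht)
  linarith

/-- Kružkov's maximum principle (Theorem 4.2 of the paper). `u` solves the forced
Burgers equation `u_t + u u_x − ν u_xx = ∂ₜξ` on `(0,T] × S¹` (S¹ = ℝ/ℤ, functions
1-periodic in space), in the sense that `v = u − ξ` classically solves
`v_t + u u_x − ν v_xx = ν ξ_xx`.  If `K ≥ 1` bounds `|∂ₓ^j ξ|` for `j = 0,…,3` on
`[0,T] × S¹`, then `sup_x (u_x)⁺`, `|u|_∞` and `|u_x|_{L¹}` at time `t ∈ [θ,T]` are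
bounded by `C θ⁻¹ K`, with `C = C(T)` independent of `u`, `ξ` and of `ν ∈ (0,1]`. -/
theorem stmt_5 (T : ℝ) (hT : 0 < T) :
    ∃ C > (0:ℝ), ∀ ν ∈ Ioc (0:ℝ) 1,
      ∀ ξ u : ℝ → ℝ → ℝ, ∀ K : ℝ,
        -- regularity, periodicity and zero mean of the force ξ
        (∀ t, Function.Periodic (ξ t) 1) →
        (∀ t ∈ Icc (0:ℝ) T, ContDiff ℝ 3 (ξ t)) →
        (∀ j : ℕ, j ≤ 3 →
          ContinuousOn (fun p : ℝ × ℝ => iteratedDeriv j (ξ p.1) p.2) (Icc 0 T ×ˢ univ)) →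
        (∀ t ∈ Icc (0:ℝ) T, ∫ x in (0:ℝ)..1, ξ t x = 0) →
        -- K bounds the C³ norm of ξ, K ≥ 1
        1 ≤ K →
        (∀ t ∈ Icc (0:ℝ) T, ∀ j : ℕ, j ≤ 3 → ∀ x : ℝ, |iteratedDeriv j (ξ t) x| ≤ K) →
        -- regularity, periodicity and zero mean of u
        (∀ t, Function.Periodic (u t) 1) →
        (∀ t ∈ Icc (0:ℝ) T, ContDiff ℝ 3 (u t)) →
        (∀ j : ℕ, j ≤ 3 →
          ContinuousOn (fun p : ℝ × ℝ => iteratedDeriv j (u p.1) p.2) (Icc 0 T ×ˢ univ)) →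
        (∀ t ∈ Icc (0:ℝ) T, ∫ x in (0:ℝ)..1, u t x = 0) →
        -- v = u − ξ has continuous ∂ₜv and ∂ₜ∂ₓv on (0,T] × S¹
        (∀ x : ℝ, ∀ t ∈ Ioc (0:ℝ) T, DifferentiableAt ℝ (fun s => u s x - ξ s x) t) →
        ContinuousOn (fun p : ℝ × ℝ => deriv (fun s => u s p.2 - ξ s p.2) p.1)
          (Ioc 0 T ×ˢ univ) →
        (∀ x : ℝ, ∀ t ∈ Ioc (0:ℝ) T,
          DifferentiableAt ℝ (fun s => deriv (fun y => u s y - ξ s y) x) t) →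
        ContinuousOn
          (fun p : ℝ × ℝ => deriv (fun s => deriv (fun y => u s y - ξ s y) p.2) p.1)
          (Ioc 0 T ×ˢ univ) →
        -- the equation v_t + u u_x − ν v_xx = ν ξ_xx holds pointwise on (0,T] × S¹
        (∀ t ∈ Ioc (0:ℝ) T, ∀ x : ℝ,
          deriv (fun s => u s x - ξ s x) t + u t x * deriv (u t) x
            - ν * deriv (deriv (fun y => u t y - ξ t y)) x
          = ν * iteratedDeriv 2 (ξ t) x) →
        ∀ θ ∈ Ioc (0:ℝ) T,
          (∀ t ∈ Icc θ T, ∀ x : ℝ, max (deriv (u t) x) 0 ≤ C * θ⁻¹ * K) ∧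
          (∀ t ∈ Icc θ T, ∀ x : ℝ,
            |u t x| + ∫ y in (0:ℝ)..1, |deriv (u t) y| ≤ C * θ⁻¹ * K) := by
  obtain ⟨C, hC, hbound⟩ := stmt_5_general hT zero_le_one
  refine ⟨C, hC, fun ν hν ξ u K hξper hξdiff hξcont _ hK1 hK huper hudiff hucont humean hvdiff
    _ _ _ heq => ?_⟩
  exact hbound ν (Ioc_subset_Icc_self hν) ξ u K
    ⟨⟨fun t _ => hξper t, hξdiff, hξcont⟩, ⟨fun t _ => huper t, hudiff, hucont⟩, humean, hvdiff,
      heq⟩ hK1 fun t ht j hj => hK t ht j hj.2
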